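/- Let γ ∈ (0,1], R ∈ (0,1), c₂ > 0, and μ_s > 0. Then there exist a constant c̃ > 0 and n₀ such that for every integer n ≥ n₀ with nR ∈ ℕ, the following holds. Set ε* = 1 − R − c₂ n^{−γ}. Then every nondecreasing function P_e : [0,1] → [0,1] satisfying P_e(ε) ≤ 1 − (1−ε)^n for all ε ∈ [0,1] and P_e(ε*) ≤ n^{−9} obeys 1/(nR) + (1/(μ_s n R)) ∫_0^1 (P_e(ε)/ε) dε ≤ 1/(nR) + (1/(μ_s n R)) ( −ln(1−R) + c̃ · n^{−γ} ). -/

import Mathlib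

open MeasureTheory

/-!
Split `∫₀¹ f(ε)/ε dε` at `δ` and `b = ε*`, where `f` is the error probability. On `(0, δ]` use
`f(ε) ≤ nε`; on each of `[δ, b]` and `[b, 1]` monotonicity bounds `f` by its value at the right
endpoint, so the integrand is controlled by `1/ε` and the integral by a logarithm. With
`f(b) ≤ n^{-β}` and `δ = n^{-β}/n` the first two pieces contribute `O(n^{-β} log n)`, which is
`O(n^{-γ})` for every `γ < β`; the last is `-log ε*`, and `-log` is Lipschitz near `1 - R`.
-/

open Filter Set
open scoped Topology

section Integral

variable {f : ℝ → ℝ} {a b L η : ℝ}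

lemma intervalIntegrable_div_of_monotoneOn (ha : 0 < a) (hab : a ≤ b)
    (hf : MonotoneOn f (Icc a b)) : IntervalIntegrable (fun x ↦ f x / x) volume a b := by
  rw [← uIcc_of_le hab] at hf
  have hinv : ContinuousOn (fun x : ℝ ↦ x⁻¹) (uIcc a b) := by
    rw [uIcc_of_le hab]
    exact continuousOn_id.inv₀ fun x hx ↦ (ha.trans_le hx.1).ne'
  simpa only [div_eq_mul_inv] using hf.intervalIntegrable.mul_continuousOn hinv

lemma integral_div_le_mul_log_of_monotoneOn (ha : 0 < a) (hab : a ≤ b)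
    (hf : MonotoneOn f (Icc a b)) : ∫ x in a..b, f x / x ≤ f b * Real.log (b / a) := by
  calc ∫ x in a..b, f x / x
      ≤ ∫ x in a..b, f b / x := by
        refine intervalIntegral.integral_mono_on hab
          (intervalIntegrable_div_of_monotoneOn ha hab hf)
          (intervalIntegrable_div_of_monotoneOn ha hab monotoneOn_const) fun x hx ↦ ?_
        exact div_le_div_of_nonneg_right (hf hx (right_mem_Icc.2 hab) hx.2) (ha.le.trans hx.1)
    _ = f b * Real.log (b / a) := by
        simp only [div_eq_mul_inv (f b), intervalIntegral.integral_const_mul,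
          integral_inv_of_pos ha (ha.trans_le hab)]

lemma norm_div_le_of_mem_Icc {x : ℝ} (hx : 0 < x) (hfx : f x ∈ Icc 0 (L * x)) :
    ‖f x / x‖ ≤ L := by
  rw [Real.norm_of_nonneg (div_nonneg hfx.1 hx.le), div_le_iff₀ hx]
  exact hfx.2

lemma intervalIntegrable_div_of_mem_Icc (hb : 0 ≤ b) (hmono : MonotoneOn f (Ioc 0 b))
    (hf : ∀ x ∈ Ioc 0 b, f x ∈ Icc 0 (L * x)) :
    IntervalIntegrable (fun x ↦ f x / x) volume 0 b := by
  rw [intervalIntegrable_iff_integrableOn_Ioc_of_le hb]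
  have hmeas := aemeasurable_restrict_of_monotoneOn (μ := volume) measurableSet_Ioc hmono
  refine IntegrableOn.of_bound measure_Ioc_lt_top
    (hmeas.div aemeasurable_id).aestronglyMeasurable L ?_
  filter_upwards [ae_restrict_mem measurableSet_Ioc] with x hx
  exact norm_div_le_of_mem_Icc hx.1 (hf x hx)

lemma integral_div_le_of_mem_Icc (hb : 0 ≤ b) (hf : ∀ x ∈ Ioc 0 b, f x ∈ Icc 0 (L * x)) :
    ∫ x in (0 : ℝ)..b, f x / x ≤ L * b := by
  have hnorm : ‖∫ x in (0 : ℝ)..b, f x / x‖ ≤ L * |b - 0| :=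
    intervalIntegral.norm_integral_le_of_norm_le_const fun x hx ↦ by
      rw [uIoc_of_le hb] at hx
      exact norm_div_le_of_mem_Icc hx.1 (hf x hx)
  rw [sub_zero, abs_of_nonneg hb] at hnorm
  exact (Real.le_norm_self _).trans hnorm

lemma integral_div_le_mul_one_add_log_sub_log (hf : MonotoneOn f (Icc 0 1))
    (hf01 : MapsTo f (Icc 0 1) (Icc 0 1)) (hL : ∀ x ∈ Ioc (0 : ℝ) 1, f x ≤ L * x)
    (hL₀ : 0 < L) (hη : 0 < η) (hηb : η / L ≤ b) (hb : b ≤ 1) (hfb : f b ≤ η) :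
    ∫ x in (0 : ℝ)..1, f x / x ≤ η * (1 + Real.log (L / η)) - Real.log b := by
  set δ := η / L with hδ
  have hδ₀ : 0 < δ := div_pos hη hL₀
  have hb₀ : 0 < b := hδ₀.trans_le hηb
  have hfδ : MonotoneOn f (Icc δ b) := hf.mono (Icc_subset_Icc hδ₀.le hb)
  have hfb1 : MonotoneOn f (Icc b 1) := hf.mono (Icc_subset_Icc_left hb₀.le)
  have hsub : Ioc 0 δ ⊆ Ioc 0 1 := Ioc_subset_Ioc_right (hηb.trans hb)
  have hfL : ∀ x ∈ Ioc 0 δ, f x ∈ Icc 0 (L * x) := fun x hx ↦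
    ⟨(hf01 (Ioc_subset_Icc_self (hsub hx))).1, hL x (hsub hx)⟩
  have hnear : ∫ x in (0 : ℝ)..δ, f x / x ≤ η := by
    calc ∫ x in (0 : ℝ)..δ, f x / x
        ≤ L * δ := integral_div_le_of_mem_Icc hδ₀.le hfL
      _ = η := mul_div_cancel₀ η hL₀.ne'
  have hmiddle : ∫ x in δ..b, f x / x ≤ η * Real.log (L / η) := by
    calc ∫ x in δ..b, f x / x
        ≤ f b * Real.log (b / δ) := integral_div_le_mul_log_of_monotoneOn hδ₀ hηb hfδ
      _ ≤ η * Real.log (1 / δ) := by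
        have : 0 ≤ Real.log (b / δ) := Real.log_nonneg ((one_le_div hδ₀).2 hηb)
        gcongr
      _ = η * Real.log (L / η) := by rw [hδ, one_div_div]
  have hfar : ∫ x in b..1, f x / x ≤ -Real.log b := by
    calc ∫ x in b..1, f x / x
        ≤ f 1 * Real.log (1 / b) := integral_div_le_mul_log_of_monotoneOn hb₀ hb hfb1
      _ ≤ Real.log (1 / b) := mul_le_of_le_one_left (Real.log_nonneg ((one_le_div hb₀).2 hb))
        (hf01 (right_mem_Icc.2 zero_le_one)).2
      _ = -Real.log b := by rw [one_div, Real.log_inv]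
  have hintδ : IntervalIntegrable (fun x ↦ f x / x) volume 0 δ :=
    intervalIntegrable_div_of_mem_Icc hδ₀.le (hf.mono (hsub.trans Ioc_subset_Icc_self)) hfL
  have hintb := intervalIntegrable_div_of_monotoneOn hδ₀ hηb hfδ
  have hint1 := intervalIntegrable_div_of_monotoneOn hb₀ hb hfb1
  rw [← intervalIntegral.integral_add_adjacent_intervals (hintδ.trans hintb) hint1,
    ← intervalIntegral.integral_add_adjacent_intervals hintδ hintb]
  linarith

end Integral

lemma rpow_neg_mul_one_add_mul_log_le {x k β γ : ℝ} (hx : 1 ≤ x) (hk : 0 ≤ k) (hγβ : γ < β) :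
    x ^ (-β) * (1 + k * Real.log x) ≤ (1 + k / (β - γ)) * x ^ (-γ) := by
  have hx₀ : 0 < x := one_pos.trans_le hx
  have hlog : Real.log x ≤ x ^ (β - γ) / (β - γ) :=
    Real.log_le_rpow_div hx₀.le (sub_pos.2 hγβ)
  have hone : 1 ≤ x ^ (β - γ) := Real.one_le_rpow hx (sub_pos.2 hγβ).le
  calc x ^ (-β) * (1 + k * Real.log x)
      ≤ x ^ (-β) * (x ^ (β - γ) + k * (x ^ (β - γ) / (β - γ))) := by gcongr
    _ = (1 + k / (β - γ)) * (x ^ (-β) * x ^ (β - γ)) := by ring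
    _ = (1 + k / (β - γ)) * x ^ (-γ) := by rw [← Real.rpow_add hx₀]; congr 2; ring

lemma neg_log_sub_le {a x : ℝ} (ha : 0 < a) (hx : |x| ≤ a / 2) :
    -Real.log (a - x) ≤ -Real.log a + 2 / a * |x| := by
  have hax : a / 2 ≤ a - x := by linarith [le_abs_self x]
  have hax₀ : 0 < a - x := (half_pos ha).trans_le hax
  have hlog : Real.log a - Real.log (a - x) ≤ 2 / a * |x| := by
    calc Real.log a - Real.log (a - x)
        = Real.log (a / (a - x)) := (Real.log_div ha.ne' hax₀.ne').symm
      _ ≤ a / (a - x) - 1 := Real.log_le_sub_one_of_pos (div_pos ha hax₀)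
      _ = x / (a - x) := by field_simp; ring
      _ ≤ |x| / (a / 2) := by gcongr; exact le_abs_self x
      _ = 2 / a * |x| := by field_simp
  linarith

lemma one_sub_one_sub_pow_le_mul {ε : ℝ} (hε : ε ≤ 2) (n : ℕ) : 1 - (1 - ε) ^ n ≤ n * ε := by
  have hbernoulli := one_add_mul_le_pow (show -2 ≤ -ε by linarith) n
  rw [← sub_eq_add_neg] at hbernoulli
  linarith

lemma integral_div_le_neg_log_add_mul_rpow_neg {f : ℝ → ℝ} {a c x β γ : ℝ} (hx : 1 ≤ x)
    (hβ : 0 ≤ 1 + β) (hγβ : γ < β) (hgap : |c * x ^ (-γ)| ≤ a / 2)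
    (hcut : x ^ (-(1 + β)) ≤ a / 2) (hb : a - c * x ^ (-γ) ≤ 1) (hf : MonotoneOn f (Icc 0 1))
    (hf01 : MapsTo f (Icc 0 1) (Icc 0 1)) (hfx : ∀ ε ∈ Ioc (0 : ℝ) 1, f ε ≤ x * ε)
    (hfb : f (a - c * x ^ (-γ)) ≤ x ^ (-β)) :
    ∫ ε in (0 : ℝ)..1, f ε / ε ≤
      -Real.log a + (1 + (1 + β) / (β - γ) + 2 / a * |c|) * x ^ (-γ) := by
  have hx₀ : 0 < x := one_pos.trans_le hx
  have ha : 0 < a := by linarith [Real.rpow_pos_of_pos hx₀ (-(1 + β))]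
  have hcut_eq : x ^ (-β) / x = x ^ (-(1 + β)) := by
    rw [← Real.rpow_sub_one hx₀.ne', neg_add_rev, sub_eq_add_neg]
  have hcut_le : x ^ (-β) / x ≤ a - c * x ^ (-γ) := by
    linarith [le_abs_self (c * x ^ (-γ))]
  have hlog_ratio : Real.log (x / x ^ (-β)) = (1 + β) * Real.log x := by
    rw [← inv_div, hcut_eq, ← Real.rpow_neg hx₀.le, neg_neg, Real.log_rpow hx₀]
  calc ∫ ε in (0 : ℝ)..1, f ε / ε
      ≤ x ^ (-β) * (1 + (1 + β) * Real.log x) - Real.log (a - c * x ^ (-γ)) :=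
        hlog_ratio ▸ integral_div_le_mul_one_add_log_sub_log hf hf01 hfx hx₀
          (Real.rpow_pos_of_pos hx₀ _) hcut_le hb hfb
    _ ≤ (1 + (1 + β) / (β - γ)) * x ^ (-γ) + (-Real.log a + 2 / a * |c * x ^ (-γ)|) := by
        linarith [rpow_neg_mul_one_add_mul_log_le hx hβ hγβ, neg_log_sub_le ha hgap]
    _ = -Real.log a + (1 + (1 + β) / (β - γ) + 2 / a * |c|) * x ^ (-γ) := by
        rw [abs_mul, abs_of_pos (Real.rpow_pos_of_pos hx₀ _)]
        ring

lemma tendsto_natCast_rpow_neg_atTop {κ : ℝ} (hκ : 0 < κ) :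
    Tendsto (fun n : ℕ ↦ (n : ℝ) ^ (-κ)) atTop (𝓝 0) :=
  (tendsto_rpow_neg_atTop hκ).comp tendsto_natCast_atTop_atTop

theorem average_execution_time_large_kernels_general {γ β R : ℝ} (c₂ : ℝ) (hγ : 0 < γ)
    (hγβ : γ < β) (hR : R ∈ Ioo (0 : ℝ) 1) :
    ∃ c : ℝ, 0 < c ∧ ∃ n₀ : ℕ, ∀ n : ℕ, n₀ ≤ n → ∀ μs : ℝ, 0 < μs →
      ∀ Pe : ℝ → ℝ, MonotoneOn Pe (Icc 0 1) → MapsTo Pe (Icc 0 1) (Icc 0 1) →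
        (∀ ε ∈ Ioc (0 : ℝ) 1, Pe ε ≤ n * ε) →
        Pe (1 - R - c₂ * (n : ℝ) ^ (-γ)) ≤ (n : ℝ) ^ (-β) →
        1 / ((n : ℝ) * R) + (1 / (μs * (n : ℝ) * R)) * ∫ ε in Ioc (0 : ℝ) 1, Pe ε / ε ≤
          1 / ((n : ℝ) * R) + (1 / (μs * (n : ℝ) * R)) *
            (-Real.log (1 - R) + c * (n : ℝ) ^ (-γ)) := by
  obtain ⟨hR₀, hR₁⟩ := hR
  have hβ : 0 < 1 + β := by linarith
  have hcapacity : 0 < 1 - R := sub_pos.2 hR₁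
  have hconst : 0 < 1 + (1 + β) / (β - γ) + 2 / (1 - R) * |c₂| := by
    have := sub_pos.2 hγβ
    positivity
  have hgap : Tendsto (fun n : ℕ ↦ |c₂ * (n : ℝ) ^ (-γ)|) atTop (𝓝 0) := by
    simpa only [mul_zero, abs_zero] using
      ((tendsto_natCast_rpow_neg_atTop hγ).const_mul c₂).abs
  obtain ⟨n₀, hn₀⟩ := eventually_atTop.1 <| (eventually_ge_atTop 1).and <|
    (hgap.eventually_le_const (half_pos hcapacity)).and <|
    (hgap.eventually_le_const hR₀).and <|
    (tendsto_natCast_rpow_neg_atTop hβ).eventually_le_const (half_pos hcapacity)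
  refine ⟨_, hconst, n₀, fun n hn μs hμs Pe hmono hPe01 hPe_le hPe_threshold ↦ ?_⟩
  obtain ⟨hn₁, hgap_le, hgap_le_R, hcut⟩ := hn₀ n hn
  have hthreshold_le : 1 - R - c₂ * (n : ℝ) ^ (-γ) ≤ 1 := by
    linarith [neg_abs_le (c₂ * (n : ℝ) ^ (-γ))]
  rw [← intervalIntegral.integral_of_le zero_le_one]
  gcongr
  exact integral_div_le_neg_log_add_mul_rpow_neg (mod_cast hn₁) hβ.le hγβ hgap_le hcut
    hthreshold_le hmono hPe01 hPe_le hPe_threshold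

/-- **analytic core of Theorem 2 of the paper.** Let `γ ∈ (0,1]`,
`R ∈ (0,1)`, `c₂ > 0`, `μ_s > 0`. Then there are `c̃ > 0` and `n₀` such that for every
`n ≥ n₀` with `nR ∈ ℕ`, setting `ε* = 1 − R − c₂ n^{−γ}`, every nondecreasing
`P_e : [0,1] → [0,1]` with `P_e(ε) ≤ 1 − (1−ε)^n` and `P_e(ε*) ≤ n^{−9}` satisfies
the claimed bound on the average execution time. -/
theorem average_execution_time_large_kernels (γ R c₂ μs : ℝ)
    (hγ : γ ∈ Set.Ioc (0:ℝ) 1) (hR : R ∈ Set.Ioo (0:ℝ) 1)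
    (hc₂ : 0 < c₂) (hμs : 0 < μs) :
    ∃ c : ℝ, 0 < c ∧ ∃ n₀ : ℕ, ∀ n : ℕ, n₀ ≤ n → (∃ k : ℕ, (k:ℝ) = (n:ℝ) * R) →
      ∀ εs : ℝ, εs = 1 - R - c₂ * (n:ℝ) ^ (-γ) →
      ∀ Pe : ℝ → ℝ, MonotoneOn Pe (Set.Icc (0:ℝ) 1) →
        (∀ ε ∈ Set.Icc (0:ℝ) 1, Pe ε ∈ Set.Icc (0:ℝ) 1) →
        (∀ ε ∈ Set.Icc (0:ℝ) 1, Pe ε ≤ 1 - (1 - ε) ^ n) →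
        Pe εs ≤ (n:ℝ) ^ (-(9:ℝ)) →
        1 / ((n:ℝ) * R) +
            (1 / (μs * (n:ℝ) * R)) * ∫ ε in Set.Ioc (0:ℝ) 1, Pe ε / ε ≤
          1 / ((n:ℝ) * R) + (1 / (μs * (n:ℝ) * R)) *
            (-Real.log (1 - R) + c * (n:ℝ) ^ (-γ)) := by
  obtain ⟨c, hc, n₀, hn₀⟩ := average_execution_time_large_kernels_general (β := 9) c₂ hγ.1
    (by linarith [hγ.2]) hR
  exact ⟨c, hc, n₀, fun n hn _ εs hεs Pe hmono hPe01 hPe_le hPe_threshold ↦ hn₀ n hn μs hμs Pe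
    hmono hPe01 (fun ε hε ↦ (hPe_le ε (Ioc_subset_Icc_self hε)).trans
      (one_sub_one_sub_pow_le_mul (hε.2.trans one_le_two) n)) (hεs ▸ hPe_threshold)⟩
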